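/- The three closed subspaces ker T ∩ ker T*, the closure of the range of T, and the closure of the range of T* are pairwise orthogonal and H decomposes orthogonally as H = (ker T ∩ ker T*) ⊕ cl(R(T)) ⊕ cl(R(T*)). Moreover ker P = ker T ∩ ker T* and cl(R(P)) = cl(R(T)) ⊕ cl(R(T*)), so that H = ker P ⊕ cl(R(P)). -/

import Mathlib

open scoped LinearPMap

/-- The kernel of a partially defined linear operator, as a submodule of the ambient space. -/
def LinearPMap.kerS {R E F : Type*} [Ring R] [AddCommGroup E] [Module R E] [AddCommGroup F]
    [Module R F] (T : E →ₗ.[R] F) : Submodule R E :=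
  (LinearMap.ker T.toFun).map T.domain.subtype

/-- The range of a partially defined linear operator. -/
def LinearPMap.ranS {R E F : Type*} [Ring R] [AddCommGroup E] [Module R E] [AddCommGroup F]
    [Module R F] (T : E →ₗ.[R] F) : Submodule R F :=
  LinearMap.range T.toFun

/-!
Let `T : E → F` and `S : F → G` be two consecutive maps of a Hilbert complex, so that `S T = 0`, and
let `P = S†S + TT†`; the theorem is the case `S = T`. The identity `ker A† = (ran A)ᗮ`, applied to
`T`, to `S†` (as `S†† = S`) and to `P = P†`, turns every kernel into the orthogonal complement of a
range. Since `S T = 0`, the ranges of `T` and `S†` are orthogonal, so the sum of their closures is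
closed and hence equal to `(ker S ⊓ ker T†)ᗮ`. Finally, `⟪P x, x⟫ = ‖S x‖² + ‖T† x‖²` gives
`ker P = ker S ⊓ ker T†`.
-/

section Kernel

variable {R M N : Type*} [Ring R] [AddCommGroup M] [Module R M] [AddCommGroup N] [Module R N]
  {A : M →ₗ.[R] N} {x : M}

theorem mem_kerS_iff : x ∈ A.kerS ↔ ∃ h : x ∈ A.domain, A ⟨x, h⟩ = 0 := by
  constructor
  · rintro ⟨y, hy, rfl⟩
    exact ⟨y.2, hy⟩
  · rintro ⟨h, hx⟩
    exact ⟨⟨x, h⟩, hx, rfl⟩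

theorem mem_kerS_iff_mem_graph : x ∈ A.kerS ↔ (x, 0) ∈ A.graph := by
  simp [mem_kerS_iff, LinearPMap.mem_graph_iff]

end Kernel

open scoped InnerProductSpace

section HilbertSpaces

variable {𝕜 E F G : Type*} [RCLike 𝕜]
  [NormedAddCommGroup E] [InnerProductSpace 𝕜 E]
  [NormedAddCommGroup F] [InnerProductSpace 𝕜 F]
  [NormedAddCommGroup G] [InnerProductSpace 𝕜 G]

section OrthogonalSubmodules

variable {K L : Submodule 𝕜 E}

theorem isOrtho_topologicalClosure (h : K ⟂ L) :
    K.topologicalClosure ⟂ L.topologicalClosure := by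
  rw [Submodule.isOrtho_iff_le, Submodule.orthogonal_closure]
  exact K.topologicalClosure_minimal h.le L.isClosed_orthogonal

theorem hasOrthogonalProjection_sup_of_isOrtho [K.HasOrthogonalProjection]
    [L.HasOrthogonalProjection] (h : K ⟂ L) : (K ⊔ L).HasOrthogonalProjection where
  exists_orthogonal v := by
    have hK : K.starProjection v ∈ K := K.starProjection_apply_mem v
    have hL : L.starProjection v ∈ L := L.starProjection_apply_mem v
    refine ⟨K.starProjection v + L.starProjection v, Submodule.add_mem_sup hK hL, ?_⟩
    rw [← Submodule.inf_orthogonal]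
    constructor
    · rw [← sub_sub]
      exact sub_mem (K.sub_starProjection_mem_orthogonal v) (h.ge hL)
    · rw [add_comm, ← sub_sub]
      exact sub_mem (L.sub_starProjection_mem_orthogonal v) (h.le hK)

theorem orthogonal_orthogonal_sup_of_isOrtho [CompleteSpace E] (h : K ⟂ L) :
    (K ⊔ L)ᗮᗮ = K.topologicalClosure ⊔ L.topologicalClosure := by
  have := hasOrthogonalProjection_sup_of_isOrtho (isOrtho_topologicalClosure h)
  rw [← Submodule.inf_orthogonal, ← K.orthogonal_closure, ← L.orthogonal_closure,
    Submodule.inf_orthogonal, Submodule.orthogonal_orthogonal]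

end OrthogonalSubmodules

section KernelRange

theorem prodMk_zero_mem_adjoint_graph_iff {A : E →ₗ.[𝕜] F} {y : F} :
    (y, 0) ∈ A.graph.adjoint ↔ y ∈ A.ranSᗮ := by
  simp only [Submodule.mem_adjoint_iff, inner_zero_right, sub_zero, Submodule.mem_orthogonal]
  constructor
  · rintro h _ ⟨u, rfl⟩
    exact h u (A u) (A.mem_graph u)
  · intro h a b hab
    obtain ⟨u, -, rfl⟩ := A.mem_graph_iff.1 hab
    exact h _ ⟨u, rfl⟩

theorem submodule_adjoint_adjoint_of_isClosed [CompleteSpace E] [CompleteSpace F]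
    {g : Submodule 𝕜 (E × F)} (hg : IsClosed (g : Set (E × F))) : g.adjoint.adjoint = g := by
  apply le_antisymm
  · let g₂ : Submodule 𝕜 (WithLp 2 (E × F)) :=
      g.comap (WithLp.linearEquiv 2 𝕜 (E × F)).toLinearMap
    have hg₂ : IsClosed (g₂ : Set (WithLp 2 (E × F))) :=
      hg.preimage (WithLp.prod_continuous_ofLp 2 E F)
    rintro ⟨x, y⟩ hxy
    suffices WithLp.toLp 2 (x, y) ∈ g₂ᗮᗮ by
      rwa [Submodule.orthogonal_orthogonal_eq_closure,
        hg₂.submodule_topologicalClosure_eq] at this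
    intro w hw
    -- The adjoint of `g` is `g₂ᗮ` turned by `(a, b) ↦ (b, -a)`.
    have hw' : (w.snd, -w.fst) ∈ g.adjoint := by
      rw [Submodule.mem_adjoint_iff]
      intro a b hab
      simpa [WithLp.prod_inner_apply, add_comm] using hw (WithLp.toLp 2 (a, b)) hab
    have hinner : ⟪-w.fst, x⟫_𝕜 - ⟪w.snd, y⟫_𝕜 = 0 :=
      (Submodule.mem_adjoint_iff _ _).1 hxy _ _ hw'
    rw [inner_neg_left, ← neg_add', neg_eq_zero] at hinner
    exact hinner
  · rintro ⟨x, y⟩ hxy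
    rw [Submodule.mem_adjoint_iff]
    intro b a hba
    have hinner : ⟪y, b⟫_𝕜 - ⟪x, a⟫_𝕜 = 0 := (Submodule.mem_adjoint_iff _ _).1 hba _ _ hxy
    rw [← inner_conj_symm a, ← inner_conj_symm b, ← map_sub, ← neg_sub, hinner, neg_zero, map_zero]

theorem kerS_adjoint [CompleteSpace E] {A : E →ₗ.[𝕜] F} (hA : Dense (A.domain : Set E)) :
    A†.kerS = A.ranSᗮ := by
  ext y
  rw [mem_kerS_iff_mem_graph, LinearPMap.adjoint_graph_eq_graph_adjoint hA,
    prodMk_zero_mem_adjoint_graph_iff]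

theorem kerS_eq_orthogonal_ranS_adjoint [CompleteSpace E] [CompleteSpace F] {A : E →ₗ.[𝕜] F}
    (hA : Dense (A.domain : Set E)) (hAc : A.IsClosed) : A.kerS = A†.ranSᗮ := by
  ext x
  rw [mem_kerS_iff_mem_graph, ← submodule_adjoint_adjoint_of_isClosed hAc,
    ← LinearPMap.adjoint_graph_eq_graph_adjoint hA, prodMk_zero_mem_adjoint_graph_iff]

theorem kerS_eq_orthogonal_ranS_of_isSelfAdjoint [CompleteSpace E] {A : E →ₗ.[𝕜] E}
    (hA : IsSelfAdjoint A) : A.kerS = A.ranSᗮ := by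
  simpa only [LinearPMap.isSelfAdjoint_def.1 hA] using kerS_adjoint hA.dense_domain

end KernelRange

section HodgeLaplacian

variable [CompleteSpace E] [CompleteSpace F]
  {T : E →ₗ.[𝕜] F} {S : F →ₗ.[𝕜] G} {P : F →ₗ.[𝕜] F}

/-- `P` is the Hodge Laplacian `S†S + TT†` at the middle term `F` of a Hilbert complex with maps
`T : E → F` and `S : F → G`, on its natural domain. This is a predicate, so that `P` may be any
operator having this domain and these values. -/
structure IsHodgeLaplacian (T : E →ₗ.[𝕜] F) (S : F →ₗ.[𝕜] G) (P : F →ₗ.[𝕜] F) : Prop where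
  mem_domain_iff : ∀ x : F, x ∈ P.domain ↔
    ∃ (hS : x ∈ S.domain) (hT : x ∈ T†.domain), S ⟨x, hS⟩ ∈ S†.domain ∧ T† ⟨x, hT⟩ ∈ T.domain
  apply_eq : ∀ (x : F) (hx : x ∈ P.domain) (hS : x ∈ S.domain) (hT : x ∈ T†.domain)
    (hSx : S ⟨x, hS⟩ ∈ S†.domain) (hTx : T† ⟨x, hT⟩ ∈ T.domain),
    P ⟨x, hx⟩ = S† ⟨S ⟨x, hS⟩, hSx⟩ + T ⟨T† ⟨x, hT⟩, hTx⟩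

namespace IsHodgeLaplacian

theorem inner_apply_self (hP : IsHodgeLaplacian T S P) (hTd : Dense (T.domain : Set E))
    (hSd : Dense (S.domain : Set F)) {x : F} (hx : x ∈ P.domain) (hS : x ∈ S.domain)
    (hT : x ∈ T†.domain) :
    ⟪P ⟨x, hx⟩, x⟫_𝕜 = ((‖S ⟨x, hS⟩‖ ^ 2 + ‖T† ⟨x, hT⟩‖ ^ 2 : ℝ) : 𝕜) := by
  obtain ⟨_, _, hSx, hTx⟩ := (hP.mem_domain_iff x).1 hx
  have hSS : ⟪S† ⟨S ⟨x, hS⟩, hSx⟩, x⟫_𝕜 = ⟪S ⟨x, hS⟩, S ⟨x, hS⟩⟫_𝕜 :=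
    LinearPMap.adjoint_isFormalAdjoint hSd ⟨_, hSx⟩ ⟨x, hS⟩
  have hTT : ⟪T ⟨T† ⟨x, hT⟩, hTx⟩, x⟫_𝕜 = ⟪T† ⟨x, hT⟩, T† ⟨x, hT⟩⟫_𝕜 :=
    (LinearPMap.adjoint_isFormalAdjoint hTd).symm ⟨_, hTx⟩ ⟨x, hT⟩
  rw [hP.apply_eq x hx hS hT hSx hTx, inner_add_left, hSS, hTT, inner_self_eq_norm_sq_to_K,
    inner_self_eq_norm_sq_to_K]
  push_cast
  rfl

theorem kerS_eq (hP : IsHodgeLaplacian T S P) (hTd : Dense (T.domain : Set E))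
    (hSd : Dense (S.domain : Set F)) : P.kerS = S.kerS ⊓ T†.kerS := by
  ext x
  simp only [Submodule.mem_inf, mem_kerS_iff]
  constructor
  · rintro ⟨hx, hPx⟩
    obtain ⟨hS, hT, -, -⟩ := (hP.mem_domain_iff x).1 hx
    have hsum : ‖S ⟨x, hS⟩‖ ^ 2 + ‖T† ⟨x, hT⟩‖ ^ 2 = 0 := by
      have h := hP.inner_apply_self hTd hSd hx hS hT
      rw [hPx, inner_zero_left] at h
      exact_mod_cast h.symm
    rw [add_eq_zero_iff_of_nonneg (by positivity) (by positivity)] at hsum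
    exact ⟨⟨hS, by simpa using hsum.1⟩, ⟨hT, by simpa using hsum.2⟩⟩
  · rintro ⟨⟨hS, hSx⟩, ⟨hT, hTx⟩⟩
    have hSx' : S ⟨x, hS⟩ ∈ S†.domain := hSx ▸ zero_mem _
    have hTx' : T† ⟨x, hT⟩ ∈ T.domain := hTx ▸ zero_mem _
    have hx : x ∈ P.domain := (hP.mem_domain_iff x).2 ⟨hS, hT, hSx', hTx'⟩
    have hSx₀ : (⟨S ⟨x, hS⟩, hSx'⟩ : S†.domain) = 0 := Subtype.ext hSx
    have hTx₀ : (⟨T† ⟨x, hT⟩, hTx'⟩ : T.domain) = 0 := Subtype.ext hTx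
    refine ⟨hx, ?_⟩
    rw [hP.apply_eq x hx hS hT hSx' hTx', hSx₀, hTx₀, LinearPMap.map_zero, LinearPMap.map_zero,
      add_zero]

end IsHodgeLaplacian

theorem kerS_inf_kerS_adjoint_eq_orthogonal [CompleteSpace G] (hTd : Dense (T.domain : Set E))
    (hSd : Dense (S.domain : Set F)) (hSc : S.IsClosed) :
    S.kerS ⊓ T†.kerS = (T.ranS ⊔ S†.ranS)ᗮ := by
  rw [kerS_adjoint hTd, kerS_eq_orthogonal_ranS_adjoint hSd hSc, inf_comm,
    Submodule.inf_orthogonal]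

theorem stmt_3_general [CompleteSpace G] (hTd : Dense (T.domain : Set E))
    (hSd : Dense (S.domain : Set F)) (hSc : S.IsClosed) (hST : T.ranS ≤ S.kerS)
    (hP : IsHodgeLaplacian T S P) (hPsa : IsSelfAdjoint P) :
    IsClosed ((S.kerS ⊓ T†.kerS : Submodule 𝕜 F) : Set F) ∧
    S.kerS ⊓ T†.kerS ≤ T.ranS.topologicalClosureᗮ ∧
    S.kerS ⊓ T†.kerS ≤ S†.ranS.topologicalClosureᗮ ∧
    T.ranS.topologicalClosure ≤ S†.ranS.topologicalClosureᗮ ∧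
    S.kerS ⊓ T†.kerS ⊔ T.ranS.topologicalClosure ⊔ S†.ranS.topologicalClosure = ⊤ ∧
    P.kerS = S.kerS ⊓ T†.kerS ∧
    P.ranS.topologicalClosure = T.ranS.topologicalClosure ⊔ S†.ranS.topologicalClosure ∧
    P.kerS ≤ P.ranS.topologicalClosureᗮ ∧
    P.kerS ⊔ P.ranS.topologicalClosure = ⊤ := by
  have hortho : T.ranS ⟂ S†.ranS := hST.trans (kerS_eq_orthogonal_ranS_adjoint hSd hSc).le
  have hharm : S.kerS ⊓ T†.kerS = (T.ranS ⊔ S†.ranS)ᗮ :=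
    kerS_inf_kerS_adjoint_eq_orthogonal hTd hSd hSc
  have hharm_orth : (S.kerS ⊓ T†.kerS)ᗮ = T.ranS.topologicalClosure ⊔ S†.ranS.topologicalClosure :=
    hharm ▸ orthogonal_orthogonal_sup_of_isOrtho hortho
  have hclosed : IsClosed ((S.kerS ⊓ T†.kerS : Submodule 𝕜 F) : Set F) :=
    hharm ▸ Submodule.isClosed_orthogonal _
  have := hclosed.completeSpace_coe
  have hspan : S.kerS ⊓ T†.kerS ⊔ (S.kerS ⊓ T†.kerS)ᗮ = ⊤ :=
    Submodule.sup_orthogonal_of_hasOrthogonalProjection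
  have hkerP : P.kerS = S.kerS ⊓ T†.kerS := hP.kerS_eq hTd hSd
  have hranP : P.ranS.topologicalClosure = (S.kerS ⊓ T†.kerS)ᗮ := by
    rw [← hkerP, kerS_eq_orthogonal_ranS_of_isSelfAdjoint hPsa,
      P.ranS.orthogonal_orthogonal_eq_closure]
  have hle {K : Submodule 𝕜 F} (hK : K ≤ T.ranS ⊔ S†.ranS) :
      S.kerS ⊓ T†.kerS ≤ K.topologicalClosureᗮ := by
    rw [K.orthogonal_closure, hharm]
    exact Submodule.orthogonal_le hK
  refine ⟨hclosed, hle le_sup_left, hle le_sup_right, (isOrtho_topologicalClosure hortho).le,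
    ?_, hkerP, hranP.trans hharm_orth, ?_, ?_⟩
  · rw [sup_assoc, ← hharm_orth, hspan]
  · rw [hranP, hkerP]
    exact Submodule.le_orthogonal_orthogonal _
  · rw [hranP, hkerP, hspan]

end HodgeLaplacian

end HilbertSpaces

/-- The orthogonal decomposition `H = (ker T ∩ ker T*) ⊕ cl(R(T)) ⊕ cl(R(T*))`, together with
`ker P = ker T ∩ ker T*` and `cl(R(P)) = cl(R(T)) ⊕ cl(R(T*))`, so `H = ker P ⊕ cl(R(P))`. -/
theorem stmt_3 {H : Type*} [NormedAddCommGroup H] [InnerProductSpace ℂ H] [CompleteSpace H]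
    (T : H →ₗ.[ℂ] H) (hTd : Dense (T.domain : Set H)) (hTc : T.IsClosed)
    (hTr : ∀ u : T.domain, T u ∈ T.domain)
    (hT2 : ∀ u : T.domain, T ⟨T u, hTr u⟩ = 0)
    (P : H →ₗ.[ℂ] H)
    (hPdom : ∀ x : H, x ∈ P.domain ↔
      ∃ (h1 : x ∈ T.domain) (h2 : x ∈ (T†).domain),
        T ⟨x, h1⟩ ∈ (T†).domain ∧ T† ⟨x, h2⟩ ∈ T.domain)
    (hPval : ∀ (x : H) (hx : x ∈ P.domain) (h1 : x ∈ T.domain) (h2 : x ∈ (T†).domain)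
      (h3 : T ⟨x, h1⟩ ∈ (T†).domain) (h4 : T† ⟨x, h2⟩ ∈ T.domain),
      P ⟨x, hx⟩ = T† ⟨T ⟨x, h1⟩, h3⟩ + T ⟨T† ⟨x, h2⟩, h4⟩)
    (hPsa : IsSelfAdjoint P) :
    IsClosed ((T.kerS ⊓ (T†).kerS : Submodule ℂ H) : Set H) ∧
    -- the three subspaces are pairwise orthogonal
    (T.kerS ⊓ (T†).kerS) ≤ (T.ranS.topologicalClosure)ᗮ ∧
    (T.kerS ⊓ (T†).kerS) ≤ ((T†).ranS.topologicalClosure)ᗮ ∧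
    T.ranS.topologicalClosure ≤ ((T†).ranS.topologicalClosure)ᗮ ∧
    -- together they span `H`
    (T.kerS ⊓ (T†).kerS) ⊔ T.ranS.topologicalClosure ⊔ (T†).ranS.topologicalClosure = ⊤ ∧
    -- kernel and closed range of `P`
    P.kerS = T.kerS ⊓ (T†).kerS ∧
    P.ranS.topologicalClosure = T.ranS.topologicalClosure ⊔ (T†).ranS.topologicalClosure ∧
    P.kerS ≤ (P.ranS.topologicalClosure)ᗮ ∧
    P.kerS ⊔ P.ranS.topologicalClosure = ⊤ := by
  have hran_le_ker : T.ranS ≤ T.kerS := by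
    rintro _ ⟨u, rfl⟩
    exact mem_kerS_iff.2 ⟨hTr u, hT2 u⟩
  exact stmt_3_general hTd hTd hTc hran_le_ker ⟨hPdom, hPval⟩ hPsa
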